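/- Let Φ = A_{n−1} and let I, J ⊆ Δ be arbitrary. Then the system (Φ, Φ_I, Φ_J) contains at most one block: any two weights λ, μ ∈ ^IW^Jλ̄ satisfy λ ⟷ μ, where λ̄ is a dominant integral weight with Φ_{λ̄} = Φ_J. (Equivalently, for g = gl(n, ℂ) every infinitesimal block O_λ^p of parabolic category O is a single block — Brundan's theorem for type A.) -/

import Mathlib

namespace JantzenBlocksA

open scoped Classical

/-- The weight space `ℝ^n`. -/
abbrev V (n : ℕ) := Fin n → ℝ

noncomputable section

/-- The standard inner product on `ℝ^n`. -/
def inn {n : ℕ} (x y : V n) : ℝ := ∑ i, x i * y i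

/-- The standard basis vector `e i`. -/
def ee {n : ℕ} (i : Fin n) : V n := Pi.single i 1

/-- The reflection `s_v` in the vector `v`. -/
def sRefl {n : ℕ} (v x : V n) : V n := x - (2 * inn x v / inn v v) • v

/-- The root system `Φ = A_{n-1} = {e_i - e_j : i ≠ j}`. -/
def PhiA (n : ℕ) : Set (V n) := {v | ∃ i j : Fin n, i ≠ j ∧ v = ee i - ee j}

/-- The positive system `Φ⁺ = {e_i - e_j : i < j}`. -/
def PhiAPos (n : ℕ) : Set (V n) := {v | ∃ i j : Fin n, i < j ∧ v = ee i - ee j}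

/-- The simple root `α_{i+1} = e_{i+1} - e_{i+2}` (`0`-based index `i < n-1`). -/
def alphaA (n : ℕ) (i : Fin n) : V n :=
  if h : i.1 + 1 < n then ee i - ee ⟨i.1 + 1, h⟩ else 0

/-- The subsystem `Φ_I` generated by the simple roots indexed by `I`. -/
def PhiI (n : ℕ) (I : Finset (Fin n)) : Set (V n) :=
  PhiA n ∩ (Submodule.span ℝ (alphaA n '' (I : Set (Fin n))) : Set (V n))

/-- `λ` is `Φ_I`-regular. -/
def RegI (n : ℕ) (I : Finset (Fin n)) (lam : V n) : Prop :=
  ∀ β ∈ PhiI n I, inn lam β ≠ 0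

/-- `λ` is integral. -/
def IntegralW (n : ℕ) (lam : V n) : Prop :=
  ∀ β ∈ PhiA n, ∃ k : ℤ, 2 * inn lam β / inn β β = (k : ℝ)

/-- `λ` is dominant. -/
def DominantW (n : ℕ) (lam : V n) : Prop :=
  ∀ i : Fin n, 0 ≤ inn lam (alphaA n i)

/-- `μ` lies in the `W_I`-orbit of `λ`. -/
def WIOrb (n : ℕ) (I : Finset (Fin n)) : V n → V n → Prop :=
  Relation.ReflTransGen (fun x y => ∃ i ∈ I, y = sRefl (alphaA n i) x)

/-- `μ` lies in the `W`-orbit of `λ`. -/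
def WOrb (n : ℕ) : V n → V n → Prop := WIOrb n Finset.univ

/-- `λ ∈ Λ_I⁺`. -/
def LamIPlus (n : ℕ) (I : Finset (Fin n)) (lam : V n) : Prop :=
  IntegralW n lam ∧ ∀ i ∈ I, 0 < inn lam (alphaA n i)

/-- The sorted list `q_1 < … < q_{m-1}` (`1`-based values) of indices of `Δ∖I`. -/
def QlistA (n : ℕ) (I : Finset (Fin n)) : List ℕ :=
  (((Finset.univ.filter (fun j : Fin n => j.1 + 1 < n)) \ I).sort (· ≤ ·)).map
    (fun j => j.1 + 1)

/-- The number `m` of segments determined by `I`. -/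
def mvalA (n : ℕ) (I : Finset (Fin n)) : ℕ := (QlistA n I).length + 1

/-- `q_s`, with the conventions `q_0 = 0` and `q_m = n`. -/
def qA (n : ℕ) (I : Finset (Fin n)) (s : ℕ) : ℕ :=
  if s = 0 then 0 else if s < mvalA n I then (QlistA n I).getD (s - 1) 0 else n

/-- The multiplicity `n̄_t` of the `t`-th distinct value of a dominant weight. -/
def nbarA (n : ℕ) (J : Finset (Fin n)) (t : ℕ) : ℕ := qA n J t - qA n J (t - 1)

/-- `a_t = λ̄_{q̄_t}`: the `t`-th distinct entry value of the dominant weight `λ̄`. -/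
def aA (n : ℕ) (J : Finset (Fin n)) (lbar : V n) (t : ℕ) : ℝ :=
  if h : qA n J t - 1 < n then lbar ⟨qA n J t - 1, h⟩ else 0

/-- `β` is a linked root of `λ` (type `A`: no exceptional cases). -/
def LinkedA (n : ℕ) (I : Finset (Fin n)) (lam β : V n) : Prop :=
  RegI n I lam ∧ β ∈ PhiAPos n ∧ β ∉ PhiI n I ∧
  RegI n I (sRefl β lam) ∧ sRefl β lam ≠ lam

/-- One step in a connecting chain. -/
def ConnStepA (n : ℕ) (I : Finset (Fin n)) (x y : V n) : Prop :=
  RegI n I x ∧ RegI n I y ∧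
  (WIOrb n I x y ∨ ∃ β : V n, LinkedA n I x β ∧ WIOrb n I (sRefl β x) y)

/-- `λ ⟷ μ`: `λ` and `μ` are connected. -/
def ConnA (n : ℕ) (I : Finset (Fin n)) (lam mu : V n) : Prop :=
  RegI n I lam ∧ RegI n I mu ∧ Relation.ReflTransGen (ConnStepA n I) lam mu

/-- The set `^IW^Jλ̄ = Wλ̄ ∩ Λ_I⁺`. -/
def IWJsetA (n : ℕ) (I : Finset (Fin n)) (lbar : V n) : Set (V n) :=
  {mu | WOrb n lbar mu ∧ LamIPlus n I mu}

end

/-!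
Up to `W_I`, a `Φ_I`-regular weight `λ` is the `0`-`1` matrix with entries `n_s^λ(a)`, regularity
meaning that no value is repeated within a segment. Its row sums are the segment lengths and its
column sums the multiplicities of the values, so the regular weights in one `W`-orbit all give
matrices with the same margins. Conversely, an interchange `1 0 / 0 1 ↔ 0 1 / 1 0` of such matrices
swaps two different values lying in different segments, and this is the reflection in a linked root.
The theorem thus reduces to Ryser's interchange theorem: `0`-`1` matrices with the same margins are
connected by interchanges. To see this, make the matrices `A` and `B` agree in one column and
induct. If `A` has a one and `B` a zero in row `s` of that column, and the opposite holds in row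
`t`, then either row `t` of `A` has a one where row `s` has a zero or row `s` of `B` has a one where
row `t` has a zero, because otherwise row `t` would be shorter than row `s` in `A` and longer in
`B`. Hence one of the two matrices admits an interchange that reduces the disagreement.
-/

section Interchange

open Relation

variable {κ α : Type*} {A B E : Finset (κ × α)} {s t : κ} {a b : α}

/-- The interchange of Ryser's theory of `0`-`1` matrices, the matrix being encoded by the finite
set `A` of positions of its ones: the pattern with ones at `(s, a)`, `(t, b)` and zeros at
`(s, b)`, `(t, a)` is replaced by the opposite one. -/
def Interchange (A B : Finset (κ × α)) : Prop :=
  ∃ s t a b, s ≠ t ∧ a ≠ b ∧ ∃ C : Multiset (κ × α),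
    A.val = (s, a) ::ₘ (t, b) ::ₘ C ∧ B.val = (s, b) ::ₘ (t, a) ::ₘ C

/-- Two `0`-`1` matrices, given by the positions of their ones, have the same row sums and the same
column sums; the row sums are recorded as the multiset of row indices of the ones, and likewise for
columns. -/
structure SameMargins (A B : Finset (κ × α)) : Prop where
  map_fst : A.val.map Prod.fst = B.val.map Prod.fst
  map_snd : A.val.map Prod.snd = B.val.map Prod.snd

/-- The columns of the ones in row `s`. -/
noncomputable def row (A : Finset (κ × α)) (s : κ) : Finset α :=
  A.preimage (Prod.mk s) (Prod.mk_right_injective s).injOn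

/-- The rows of the ones in column `a`. -/
noncomputable def col (A : Finset (κ × α)) (a : α) : Finset κ :=
  A.preimage (·, a) (Prod.mk_left_injective a).injOn

@[simp]
theorem mem_row : a ∈ row A s ↔ (s, a) ∈ A := Finset.mem_preimage

@[simp]
theorem mem_col : s ∈ col A a ↔ (s, a) ∈ A := Finset.mem_preimage

theorem card_row (A : Finset (κ × α)) (s : κ) : (row A s).card = (A.val.map Prod.fst).count s := by
  rw [row, Finset.card_preimage, Multiset.count_map, Finset.card_def, Finset.filter_val]
  congr 1
  refine Multiset.filter_congr fun p _ => ⟨?_, fun h => ⟨p.2, by rw [h]⟩⟩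
  rintro ⟨_, rfl⟩
  rfl

theorem card_col (A : Finset (κ × α)) (a : α) : (col A a).card = (A.val.map Prod.snd).count a := by
  rw [col, Finset.card_preimage, Multiset.count_map, Finset.card_def, Finset.filter_val]
  congr 1
  refine Multiset.filter_congr fun p _ => ⟨?_, fun h => ⟨p.1, by rw [h]⟩⟩
  rintro ⟨_, rfl⟩
  rfl

namespace SameMargins

theorem symm (h : SameMargins A B) : SameMargins B A := ⟨h.map_fst.symm, h.map_snd.symm⟩

theorem trans {C : Finset (κ × α)} (h : SameMargins A B) (h' : SameMargins B C) :
    SameMargins A C :=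
  ⟨h.map_fst.trans h'.map_fst, h.map_snd.trans h'.map_snd⟩

theorem card_eq (h : SameMargins A B) : A.card = B.card := by
  simpa using congrArg Multiset.card h.map_fst

theorem card_row_eq (h : SameMargins A B) (s : κ) : (row A s).card = (row B s).card := by
  rw [card_row, card_row, h.map_fst]

theorem card_col_eq (h : SameMargins A B) (a : α) : (col A a).card = (col B a).card := by
  rw [card_col, card_col, h.map_snd]

theorem of_disjUnion {hA : Disjoint A E} {hB : Disjoint B E}
    (h : SameMargins (A.disjUnion E hA) (B.disjUnion E hB)) : SameMargins A B :=
  ⟨by simpa only [Finset.disjUnion, Multiset.map_add, add_left_inj] using h.map_fst,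
    by simpa only [Finset.disjUnion, Multiset.map_add, add_left_inj] using h.map_snd⟩

end SameMargins

namespace Interchange

theorem symm (h : Interchange A B) : Interchange B A := by
  obtain ⟨s, t, a, b, hst, hab, C, hA, hB⟩ := h
  exact ⟨s, t, b, a, hst, hab.symm, C, hB, hA⟩

theorem sameMargins (h : Interchange A B) : SameMargins A B := by
  obtain ⟨s, t, a, b, -, -, C, hA, hB⟩ := h
  constructor
  · simp only [hA, hB, Multiset.map_cons]
  · simp only [hA, hB, Multiset.map_cons, Multiset.cons_swap]

theorem disjUnion (h : Interchange A B) (hA : Disjoint A E) (hB : Disjoint B E) :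
    Interchange (A.disjUnion E hA) (B.disjUnion E hB) := by
  obtain ⟨s, t, a, b, hst, hab, C, hAC, hBC⟩ := h
  exact ⟨s, t, a, b, hst, hab, C + E.val, by simp only [Finset.disjUnion, hAC, Multiset.cons_add],
    by simp only [Finset.disjUnion, hBC, Multiset.cons_add]⟩

end Interchange

theorem SameMargins.of_reflTransGen (h : ReflTransGen Interchange A B) : SameMargins A B := by
  induction h with
  | refl => exact ⟨rfl, rfl⟩
  | tail _ hstep ih => exact ih.trans hstep.sameMargins

theorem Interchange.exists_of_mem (hsa : (s, a) ∈ A) (htb : (t, b) ∈ A) (hsb : (s, b) ∉ A)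
    (hta : (t, a) ∉ A) :
    ∃ A', Interchange A A' ∧ col A' a = insert t ((col A a).erase s) := by
  have hst : s ≠ t := by rintro rfl; exact hta hsa
  have hab : a ≠ b := by rintro rfl; exact hta htb
  set C := (A.erase (s, a)).erase (t, b) with hC
  have htbC : (t, b) ∈ A.erase (s, a) := by simp [htb, hst.symm]
  have htaC : (t, a) ∉ C := by simp [hC, hta]
  have hsbC : (s, b) ∉ insert (t, a) C := by simp [hC, hsb, hst]
  refine ⟨insert (s, b) (insert (t, a) C), ⟨s, t, a, b, hst, hab, C.val, ?_, ?_⟩, ?_⟩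
  · rw [hC, Finset.erase_val, Multiset.cons_erase htbC, Finset.erase_val, Multiset.cons_erase hsa]
  · rw [Finset.insert_val_of_notMem hsbC, Finset.insert_val_of_notMem htaC]
  · ext u
    simp [hC, hab]

/-- If both inclusions held, they would be strict because of column `a`, and
`#(row A t) < #(row A s) = #(row B s) < #(row B t)` would contradict `#(row A t) = #(row B t)`. -/
theorem SameMargins.not_row_subset_or (h : SameMargins A B) (hsA : (s, a) ∈ A) (hsB : (s, a) ∉ B)
    (htB : (t, a) ∈ B) (htA : (t, a) ∉ A) : ¬ row A t ⊆ row A s ∨ ¬ row B s ⊆ row B t := by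
  by_contra! hsub
  have hA : (row A t).card < (row A s).card :=
    Finset.card_lt_card ((Finset.ssubset_iff_of_subset hsub.1).2 ⟨a, by simpa, by simpa⟩)
  have hB : (row B s).card < (row B t).card :=
    Finset.card_lt_card ((Finset.ssubset_iff_of_subset hsub.2).2 ⟨a, by simpa, by simpa⟩)
  rw [h.card_row_eq, h.card_row_eq] at hA
  exact lt_asymm hA hB

theorem SameMargins.exists_interchange (h : SameMargins A B) (hcol : col A a ≠ col B a) :
    (∃ A', Interchange A A' ∧ (col A' a \ col B a).card < (col A a \ col B a).card) ∨
      ∃ B', Interchange B B' ∧ (col A a \ col B' a).card < (col A a \ col B a).card := by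
  obtain ⟨s, hsA, hsB⟩ := Finset.not_subset.1 fun hsub =>
    hcol (Finset.eq_of_subset_of_card_le hsub (h.card_col_eq a).ge)
  obtain ⟨t, htB, htA⟩ := Finset.not_subset.1 fun hsub =>
    hcol (Finset.eq_of_subset_of_card_le hsub (h.card_col_eq a).le).symm
  have hlt : ((col A a \ col B a).erase s).card < (col A a \ col B a).card :=
    Finset.card_erase_lt_of_mem (Finset.mem_sdiff.2 ⟨hsA, hsB⟩)
  rw [mem_col] at hsA hsB htA htB
  rcases h.not_row_subset_or hsA hsB htB htA with hrow | hrow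
  · obtain ⟨b, htb, hsb⟩ := Finset.not_subset.1 hrow
    obtain ⟨A', hA', hcolA'⟩ :=
      Interchange.exists_of_mem hsA (mem_row.1 htb) (mt mem_row.2 hsb) htA
    refine .inl ⟨A', hA', lt_of_eq_of_lt (congrArg Finset.card ?_) hlt⟩
    rw [hcolA', Finset.insert_sdiff_of_mem _ (mem_col.2 htB), Finset.erase_sdiff_comm]
  · obtain ⟨b, hsb, htb⟩ := Finset.not_subset.1 hrow
    obtain ⟨B', hB', hcolB'⟩ :=
      Interchange.exists_of_mem htB (mem_row.1 hsb) (mt mem_row.2 htb) hsB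
    refine .inr ⟨B', hB', lt_of_eq_of_lt (congrArg Finset.card ?_) hlt⟩
    grind [mem_col]

theorem SameMargins.exists_col_eq (h : SameMargins A B) (a : α) :
    ∃ A' B', ReflTransGen Interchange A A' ∧ ReflTransGen Interchange B B' ∧
      col A' a = col B' a := by
  induction hd : (col A a \ col B a).card using Nat.strong_induction_on generalizing A B with
  | _ d ih =>
    subst hd
    by_cases hcol : col A a = col B a
    · exact ⟨A, B, .refl, .refl, hcol⟩
    rcases h.exists_interchange hcol with ⟨A₁, hA₁, hlt⟩ | ⟨B₁, hB₁, hlt⟩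
    · obtain ⟨A', B', hA', hB', hcol'⟩ := ih _ hlt (hA₁.sameMargins.symm.trans h) rfl
      exact ⟨A', B', hA'.head hA₁, hB', hcol'⟩
    · obtain ⟨A', B', hA', hB', hcol'⟩ := ih _ hlt (h.trans hB₁.sameMargins) rfl
      exact ⟨A', B', hA', hB'.head hB₁, hcol'⟩

theorem SameMargins.disjoint_of_snd_eq (h : SameMargins A B) (hA : ∀ p ∈ A, p.2 ≠ a)
    (hE : ∀ p ∈ E, p.2 = a) : Disjoint B E := by
  refine Finset.disjoint_left.2 fun p hpB hpE => ?_
  have hp : p.2 ∈ A.val.map Prod.snd := h.map_snd ▸ Multiset.mem_map_of_mem _ hpB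
  obtain ⟨q, hqA, hq⟩ := Multiset.mem_map.1 hp
  exact hA q hqA (hq.trans (hE p hpE))

theorem exists_disjUnion_of_col_eq (h : col A a = col B a) :
    ∃ A₁ B₁ E : Finset (κ × α), ∃ (hA : Disjoint A₁ E) (hB : Disjoint B₁ E),
      A = A₁.disjUnion E hA ∧ B = B₁.disjUnion E hB ∧
        (∀ p ∈ A₁, p.2 ≠ a) ∧ ∀ p ∈ E, p.2 = a := by
  have hE : A.filter (·.2 = a) = B.filter (·.2 = a) := by
    ext ⟨s, b⟩
    simp only [Finset.mem_filter, and_congr_left_iff]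
    rintro rfl
    simpa only [mem_col] using Finset.ext_iff.1 h s
  have hdisj (D : Finset (κ × α)) : Disjoint (D.filter (·.2 ≠ a)) (D.filter (·.2 = a)) :=
    (Finset.disjoint_filter_filter_not D D _).symm
  refine ⟨A.filter (·.2 ≠ a), B.filter (·.2 ≠ a), A.filter (·.2 = a), hdisj A, hE ▸ hdisj B,
    ?_, ?_, fun p hp => (Finset.mem_filter.1 hp).2, fun p hp => (Finset.mem_filter.1 hp).2⟩
  · rw [Finset.disjUnion_eq_union, Finset.union_comm, Finset.filter_union_filter_not_eq]
  · rw [Finset.disjUnion_eq_union, hE, Finset.union_comm, Finset.filter_union_filter_not_eq]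

theorem reflTransGen_interchange_disjUnion (h : ReflTransGen Interchange A B)
    (hA : ∀ p ∈ A, p.2 ≠ a) (hE : ∀ p ∈ E, p.2 = a) (hAE : Disjoint A E) (hBE : Disjoint B E) :
    ReflTransGen Interchange (A.disjUnion E hAE) (B.disjUnion E hBE) := by
  induction h with
  | refl => exact .refl
  | tail hAC hCB ih =>
    have hCE := (SameMargins.of_reflTransGen hAC).disjoint_of_snd_eq hA hE
    exact (ih hCE).tail (hCB.disjUnion hCE hBE)

theorem SameMargins.reflTransGen_interchange (h : SameMargins A B) :
    ReflTransGen Interchange A B := by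
  induction hd : A.card using Nat.strong_induction_on generalizing A B with
  | _ d ih =>
    subst hd
    obtain rfl | ⟨⟨s, a⟩, hsa⟩ := A.eq_empty_or_nonempty
    · rw [Finset.card_eq_zero.1 h.card_eq.symm]
    obtain ⟨A', B', hA', hB', hcol⟩ := h.exists_col_eq a
    have hAA' := SameMargins.of_reflTransGen hA'
    have hmargins := (hAA'.symm.trans h).trans (.of_reflTransGen hB')
    obtain ⟨A₁, B₁, E, hA₁E, hB₁E, rfl, rfl, hA₁, hE⟩ := exists_disjUnion_of_col_eq hcol
    have hlt : A₁.card < A.card := by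
      obtain ⟨p, hp, hpa⟩ := Multiset.mem_map.1
        (hAA'.map_snd ▸ Multiset.mem_map_of_mem Prod.snd hsa : a ∈ _)
      have hpE : p ∈ E := (Finset.mem_disjUnion.1 hp).resolve_left fun hpA₁ => hA₁ p hpA₁ hpa
      rw [hAA'.card_eq, Finset.card_disjUnion]
      exact Nat.lt_add_of_pos_right (Finset.card_pos.2 ⟨p, hpE⟩)
    have h₁ := ih _ hlt hmargins.of_disjUnion rfl
    have hmid := reflTransGen_interchange_disjUnion h₁ hA₁ hE hA₁E hB₁E
    have : Std.Symm (Interchange (κ := κ) (α := α)) := ⟨fun _ _ => Interchange.symm⟩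
    exact (hA'.trans hmid).trans (_root_.symm hB')

end Interchange

section Cells

variable {ι κ α : Type*} [Fintype ι] {c : ι → κ} {x y : ι → α}

/-- The cells `(c i, x i)` occupied by a word `x` whose letters are distributed into the blocks
given by `c`. -/
def cells (c : ι → κ) (x : ι → α) : Multiset (κ × α) :=
  Finset.univ.val.map fun i => (c i, x i)

theorem nodup_cells : (cells c x).Nodup ↔ Function.Injective fun i => (c i, x i) := by
  rw [cells, Multiset.nodup_map_iff_inj_on Finset.univ.nodup]
  simp [Function.Injective]

theorem SameMargins.of_comp_perm {A B : Finset (κ × α)} (σ : Equiv.Perm ι)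
    (hA : A.val = cells c x) (hB : B.val = cells c (x ∘ σ)) : SameMargins A B := by
  constructor
  · simp [hA, hB, cells]
  · calc
      A.val.map Prod.snd = Finset.univ.val.map x := by rw [hA]; exact Multiset.map_map ..
      _ = (Finset.univ.val.map σ).map x := by rw [Multiset.map_univ_val_equiv]
      _ = Finset.univ.val.map (x ∘ σ) := Multiset.map_map ..
      _ = B.val.map Prod.snd := by rw [hB, cells, Multiset.map_map]; rfl

theorem exists_perm_of_cells_eq (hx : (cells c x).Nodup) (h : cells c y = cells c x) :
    ∃ σ : Equiv.Perm ι, c ∘ σ = c ∧ y = x ∘ σ := by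
  have hy := h ▸ hx
  have hmem (i : ι) : ∃ j, (c j, x j) = (c i, y i) := by
    have hi : (c i, y i) ∈ cells c x := h ▸ Multiset.mem_map_of_mem _ (Finset.mem_univ_val i)
    simpa [cells] using hi
  choose σ hσ using hmem
  have hinj : Function.Injective σ := fun i j hij =>
    nodup_cells.1 hy ((hσ i).symm.trans (hij ▸ hσ j))
  refine ⟨.ofBijective σ hinj.bijective_of_finite, ?_, ?_⟩
  · exact funext fun i => congrArg Prod.fst (hσ i)
  · exact funext fun i => (congrArg Prod.snd (hσ i)).symm

theorem Interchange.exists_swap [DecidableEq ι] {A B : Finset (κ × α)} (h : Interchange A B)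
    (hA : A.val = cells c x) :
    ∃ i j, c i ≠ c j ∧ x i ≠ x j ∧ B.val = cells c (x ∘ Equiv.swap i j) := by
  obtain ⟨s, t, a, b, hst, hab, C, hAC, hBC⟩ := h
  rw [hA] at hAC
  obtain ⟨i, -, hi⟩ := Multiset.mem_map.1 (show (s, a) ∈ cells c x by simp [hAC])
  obtain ⟨j, -, hj⟩ := Multiset.mem_map.1 (show (t, b) ∈ cells c x by simp [hAC])
  obtain ⟨rfl, rfl⟩ := Prod.mk.inj hi
  obtain ⟨rfl, rfl⟩ := Prod.mk.inj hj
  obtain ⟨R, hR⟩ : ∃ R, Finset.univ.val = i ::ₘ j ::ₘ R := by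
    have hij : j ≠ i := by rintro rfl; exact hst rfl
    exact ⟨_, by rw [Multiset.cons_erase ((Multiset.mem_erase_of_ne hij).2 (Finset.mem_univ_val j)),
      Multiset.cons_erase (Finset.mem_univ_val i)]⟩
  have hC : C = R.map fun k => (c k, x k) := by
    simpa [cells, hR, eq_comm] using hAC
  have hswap : ∀ k ∈ R, Equiv.swap i j k = k := by
    have hnodup : (i ::ₘ j ::ₘ R).Nodup := hR ▸ Finset.univ.nodup
    simp only [Multiset.nodup_cons, Multiset.mem_cons, not_or] at hnodup
    exact fun k hk => Equiv.swap_apply_of_ne_of_ne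
      (ne_of_mem_of_not_mem hk hnodup.1.2) (ne_of_mem_of_not_mem hk hnodup.2.1)
  refine ⟨i, j, hst, hab, ?_⟩
  rw [hBC, hC, cells, hR, Multiset.map_cons, Multiset.map_cons]
  simp only [Function.comp_apply, Equiv.swap_apply_left, Equiv.swap_apply_right]
  congr 2
  exact Multiset.map_congr rfl fun k hk => by rw [hswap k hk]

end Cells

section Weights

open Relation

variable {n : ℕ} {I : Finset (Fin n)} {i j : Fin n} {x y : V n}

theorem inn_ee_sub_ee (x : V n) (i j : Fin n) : inn x (ee i - ee j) = x i - x j := by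
  simp [inn, ee, mul_sub, Finset.sum_sub_distrib, Pi.single_apply]

theorem sRefl_ee_sub_ee (x : V n) (i j : Fin n) : sRefl (ee i - ee j) x = x ∘ Equiv.swap i j := by
  obtain rfl | hij := eq_or_ne i j
  · simp [sRefl]
  have hnorm : inn (ee i - ee j : V n) (ee i - ee j) = 2 := by
    rw [inn_ee_sub_ee]
    simp [ee, hij, hij.symm, one_add_one_eq_two]
  rw [sRefl, hnorm, inn_ee_sub_ee]
  ext k
  simp only [ee, Pi.sub_apply, Pi.smul_apply, Pi.single_apply, smul_eq_mul, Function.comp_apply,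
    Equiv.swap_apply_def]
  grind

theorem alphaA_eq (i : Fin n) : alphaA n i = ee i - ee (Order.succ i) := by
  rw [alphaA]
  split_ifs with h
  · have hcov : i ⋖ ⟨i.1 + 1, h⟩ := Fin.covBy_iff.2 (Nat.covBy_iff_add_one_eq.2 rfl)
    rw [hcov.succ_eq]
  · have hmax : IsMax i := by
      intro k _
      rw [Fin.le_def]
      omega
    rw [hmax.succ_eq, sub_self]

theorem inn_alphaA (x : V n) (i : Fin n) : inn x (alphaA n i) = x i - x (Order.succ i) := by
  rw [alphaA_eq, inn_ee_sub_ee]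

/-- The parabolic subgroup `W_I` of `S_n`, generated by the transpositions `(k, k + 1)`, `k ∈ I`.
The last index has no successor; `Order.succ` fixes it, so that it contributes only the identity. -/
def parabolic (I : Finset (Fin n)) : Subgroup (Equiv.Perm (Fin n)) :=
  Subgroup.closure ((fun k => Equiv.swap k (Order.succ k)) '' I)

theorem wIOrb_iff : WIOrb n I x y ↔ ∃ σ ∈ parabolic I, y = x ∘ σ := by
  constructor
  · intro h
    induction h with
    | refl => exact ⟨1, one_mem _, rfl⟩
    | tail _ hstep ih =>
      obtain ⟨σ, hσ, rfl⟩ := ih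
      obtain ⟨k, hk, rfl⟩ := hstep
      refine ⟨_, mul_mem hσ (Subgroup.subset_closure ⟨k, hk, rfl⟩), ?_⟩
      rw [alphaA_eq, sRefl_ee_sub_ee, Equiv.Perm.coe_mul, Function.comp_assoc]
  · rintro ⟨σ, hσ, rfl⟩
    have hstep (z : V n) {k : Fin n} (hk : k ∈ I) :
        WIOrb n I z (z ∘ Equiv.swap k (Order.succ k)) :=
      .single ⟨k, hk, by rw [alphaA_eq, sRefl_ee_sub_ee]⟩
    induction hσ using Subgroup.closure_induction_right with
    | one => exact .refl
    | mul_right σ _ τ hτ ih =>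
      obtain ⟨k, hk, rfl⟩ := hτ
      exact ih.trans (hstep _ hk)
    | mul_inv_cancel σ _ τ hτ ih =>
      obtain ⟨k, hk, rfl⟩ := hτ
      rw [Equiv.swap_inv]
      exact ih.trans (hstep _ hk)

theorem WIOrb.symm (h : WIOrb n I x y) : WIOrb n I y x := by
  obtain ⟨σ, hσ, rfl⟩ := wIOrb_iff.1 h
  exact wIOrb_iff.2 ⟨σ⁻¹, inv_mem hσ, by ext; simp⟩

/-- The segment of the position `i` determined by `I`: the positions `i` and `j` lie in the same
segment precisely when `e_i - e_j` is zero or a root of `Φ_I`, so the class of `e_i` modulo the span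
of `Φ_I` can serve as a label of the segment. -/
def segmentOf (I : Finset (Fin n)) (i : Fin n) :
    V n ⧸ Submodule.span ℝ (alphaA n '' (I : Set (Fin n))) :=
  Submodule.Quotient.mk (ee i)

theorem segmentOf_eq_iff : segmentOf I i = segmentOf I j ↔
    ee i - ee j ∈ Submodule.span ℝ (alphaA n '' (I : Set (Fin n))) :=
  Submodule.Quotient.eq _

theorem apply_eq_of_segmentOf_eq {f : V n} (hf : ∀ k ∈ I, f k = f (Order.succ k))
    (h : segmentOf I i = segmentOf I j) : f i = f j := by
  have hle : Submodule.span ℝ (alphaA n '' (I : Set (Fin n))) ≤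
      LinearMap.ker (dotProductBilin ℝ ℝ f) := by
    refine Submodule.span_le.2 ?_
    rintro _ ⟨k, hk, rfl⟩
    exact (inn_alphaA f k).trans (sub_eq_zero.2 (hf k hk))
  rw [← sub_eq_zero, ← inn_ee_sub_ee]
  exact hle (segmentOf_eq_iff.1 h)

theorem mem_parabolic {σ : Equiv.Perm (Fin n)} (h : segmentOf I ∘ σ = segmentOf I) :
    σ ∈ parabolic I := by
  have horbit (i : Fin n) : σ i ∈ MulAction.orbit (parabolic I) i := by
    have hind := apply_eq_of_segmentOf_eq (f := (MulAction.orbit (parabolic I) i).indicator 1)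
      (fun k hk => ?_) (congrFun h i)
    · by_contra hi
      simp [Set.indicator_of_notMem hi, MulAction.mem_orbit_self] at hind
    · have hmem : Order.succ k ∈ MulAction.orbit (parabolic I) k :=
        ⟨⟨_, Subgroup.subset_closure ⟨k, hk, rfl⟩⟩, Equiv.swap_apply_left k (Order.succ k)⟩
      refine Set.indicator_eq_indicator ?_ rfl
      rw [MulAction.mem_orbit_symm, MulAction.mem_orbit_symm (a₂ := i),
        MulAction.orbit_eq_iff.2 hmem]
  rw [parabolic, ← Subgroup.closure_sdiff_one] at horbit ⊢
  refine (mem_closure_isSwap ?_).2 ⟨Set.toFinite _, horbit⟩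
  rintro _ ⟨⟨k, -, rfl⟩, hk⟩
  exact ⟨k, Order.succ k, fun h => hk (Equiv.swap_eq_one_iff.2 h), rfl⟩

theorem wIOrb_of_cells_eq (hx : (cells (segmentOf I) x).Nodup)
    (h : cells (segmentOf I) y = cells (segmentOf I) x) : WIOrb n I x y := by
  obtain ⟨σ, hσ, rfl⟩ := exists_perm_of_cells_eq hx h
  exact wIOrb_iff.2 ⟨σ, mem_parabolic hσ, rfl⟩

theorem regI_iff_nodup_cells : RegI n I x ↔ (cells (segmentOf I) x).Nodup := by
  rw [nodup_cells]
  constructor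
  · intro h i j hij
    obtain ⟨hseg, hval⟩ := Prod.mk.inj hij
    by_contra hne
    refine h (ee i - ee j) ⟨⟨i, j, hne, rfl⟩, segmentOf_eq_iff.1 hseg⟩ ?_
    rw [inn_ee_sub_ee, hval, sub_self]
  · rintro h β ⟨⟨i, j, hij, rfl⟩, hspan⟩ h0
    rw [inn_ee_sub_ee, sub_eq_zero] at h0
    exact hij (h (Prod.ext (segmentOf_eq_iff.2 hspan) h0))

theorem mem_of_segmentOf_eq {k : Fin n} (h : segmentOf I i = segmentOf I j) (hik : i ≤ k)
    (hkj : k < j) : k ∈ I := by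
  by_contra hk
  have hind := apply_eq_of_segmentOf_eq (f := (Set.Iic k).indicator 1) (fun l hl => ?_) h
  · simp [hik, hkj] at hind
  · have hlk : l ≠ k := by rintro rfl; exact hk hl
    have hsucc : l ≤ k ↔ Order.succ l ≤ k :=
      ⟨fun h => Order.succ_le_of_lt (h.lt_of_ne hlk), (Order.le_succ l).trans⟩
    exact Set.indicator_eq_indicator hsucc rfl

theorem lt_of_segmentOf_eq (hx : ∀ k ∈ I, 0 < inn x (alphaA n k)) (hij : i < j)
    (h : segmentOf I i = segmentOf I j) : x j < x i := by
  have hanti : StrictAntiOn x (Set.Icc i j) := by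
    refine strictAntiOn_of_succ_lt Set.ordConnected_Icc fun k hmax hk hk' => ?_
    have hkI : k ∈ I :=
      mem_of_segmentOf_eq h hk.1 ((Order.lt_succ_of_not_isMax hmax).trans_le hk'.2)
    simpa [inn_alphaA] using hx k hkI
  exact hanti (Set.left_mem_Icc.2 hij.le) (Set.right_mem_Icc.2 hij.le) hij

theorem LamIPlus.regI (hx : LamIPlus n I x) : RegI n I x := by
  rw [regI_iff_nodup_cells, nodup_cells]
  intro i j hij
  obtain ⟨hseg, hval⟩ := Prod.mk.inj hij
  rcases lt_trichotomy i j with hlt | heq | hlt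
  · exact absurd hval (lt_of_segmentOf_eq hx.2 hlt hseg).ne'
  · exact heq
  · exact absurd hval (lt_of_segmentOf_eq hx.2 hlt hseg.symm).ne

theorem connStepA_comp_swap (hx : RegI n I x) (hy : RegI n I (x ∘ Equiv.swap i j))
    (hseg : segmentOf I i ≠ segmentOf I j) (hval : x i ≠ x j) :
    ConnStepA n I x (x ∘ Equiv.swap i j) := by
  wlog hij : i < j generalizing i j
  · rw [Equiv.swap_comm] at hy ⊢
    exact this hy hseg.symm hval.symm ((not_lt.1 hij).lt_of_ne fun h => hval (by rw [h]))
  rw [← sRefl_ee_sub_ee] at hy ⊢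
  refine ⟨hx, hy, .inr ⟨ee i - ee j, ⟨hx, ⟨i, j, hij, rfl⟩, ?_, hy, ?_⟩, .refl⟩⟩
  · exact fun hβ => hseg (segmentOf_eq_iff.2 hβ.2)
  · intro hfix
    rw [sRefl_ee_sub_ee] at hfix
    exact hval (by simpa using congrFun hfix j)

theorem exists_reflTransGen_connStepA {A B : Finset (_ × ℝ)} (h : ReflTransGen Interchange A B)
    (hA : A.val = cells (segmentOf I) x) :
    ∃ z, B.val = cells (segmentOf I) z ∧ ReflTransGen (ConnStepA n I) x z := by
  induction h with
  | refl => exact ⟨x, hA, .refl⟩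
  | @tail C D _ hCD ih =>
    obtain ⟨z, hC, hxz⟩ := ih
    obtain ⟨i, j, hseg, hval, hD⟩ := hCD.exists_swap hC
    have hz : RegI n I z := regI_iff_nodup_cells.2 (hC ▸ C.nodup)
    have hz' : RegI n I (z ∘ Equiv.swap i j) := regI_iff_nodup_cells.2 (hD ▸ D.nodup)
    exact ⟨_, hD, hxz.tail (connStepA_comp_swap hz hz' hseg hval)⟩

end Weights

theorem statement14_general (n : ℕ) (I : Finset (Fin n)) (x y : V n) (hx : RegI n I x)
    (hy : RegI n I y) (h : WOrb n x y) : ConnA n I x y := by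
  obtain ⟨σ, -, rfl⟩ := wIOrb_iff.1 h
  have hcx := regI_iff_nodup_cells.1 hx
  have hcy := regI_iff_nodup_cells.1 hy
  have hmargins : SameMargins ⟨_, hcx⟩ ⟨_, hcy⟩ := .of_comp_perm σ rfl rfl
  obtain ⟨z, hyz, hxz⟩ := exists_reflTransGen_connStepA hmargins.reflTransGen_interchange rfl
  have hcz : (cells (segmentOf I) z).Nodup := by rwa [← hyz]
  exact ⟨hx, hy, hxz.tail ⟨regI_iff_nodup_cells.2 hcz, hy, .inl (wIOrb_of_cells_eq hcz hyz)⟩⟩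

/-- Theorem 6.12 / `bkswthm1`, Brundan's theorem for type `A`. -/
theorem statement14 (n : ℕ) (I J : Finset (Fin n)) (lbar : V n)
    (hIidx : ∀ i ∈ I, i.1 + 1 < n) (hJidx : ∀ j ∈ J, j.1 + 1 < n)
    (hint : IntegralW n lbar) (hdom : DominantW n lbar)
    (hJ : ∀ i : Fin n, i.1 + 1 < n → (i ∈ J ↔ inn lbar (alphaA n i) = 0)) :
    ∀ lam ∈ IWJsetA n I lbar, ∀ mu ∈ IWJsetA n I lbar, ConnA n I lam mu := by
  intro lam hlam mu hmu
  exact statement14_general n I lam mu hlam.2.regI hmu.2.regI (hlam.1.symm.trans hmu.1)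

end JantzenBlocksA
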